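/- Let s ≥ 3 and e ≥ 1 be integers. In R(2,2^e−1)^{⊗s}, the element (z_{2,1}^{2^{e+1}−1} · z_{2,2}^{2^{e+1}−2}) · (z_{3,1}^{2^e−1} · z_{3,2}^{2^e+1}) · ∏_{i=4}^{s} (z_{i,1}^{2^e} · z_{i,2}^{2^e−1}) is nonzero (the product over 4 ≤ i ≤ s being empty if s = 3). -/

import Mathlib

open scoped TensorProduct

/-- Complete homogeneous symmetric polynomial of degree `d` in a list of elements
of a commutative (semi)ring: `h_d(l)`. -/
noncomputable def completeHomog {R : Type*} [CommSemiring R] : List R → ℕ → R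
  | [], 0 => 1
  | [], _ + 1 => 0
  | x :: l, d => ∑ t ∈ Finset.range (d + 1), x ^ t * completeHomog l (d - t)

/-- Elementary symmetric polynomial of degree `d` in a list of elements: `e_d(l)`. -/
noncomputable def elemSymm {R : Type*} [CommSemiring R] : List R → ℕ → R
  | _, 0 => 1
  | [], _ + 1 => 0
  | x :: l, d + 1 => elemSymm l (d + 1) + x * elemSymm l d

/-- The ideal of `(ZMod 2)[x_1, …, x_k]` generated by the complete homogeneous
symmetric polynomials `h_{m+i}(x_1, …, x_{k+1-i})` for `1 ≤ i ≤ k`. -/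
noncomputable def flagIdeal (k m : ℕ) : Ideal (MvPolynomial (Fin k) (ZMod 2)) :=
  Ideal.span { p | ∃ i : ℕ, 1 ≤ i ∧ i ≤ k ∧
    p = completeHomog (((List.finRange k).take (k + 1 - i)).map MvPolynomial.X) (m + i) }

/-- `R(k,m)`, the quotient of `(ZMod 2)[x_1, …, x_k]` by `flagIdeal k m`;
this is the mod-2 cohomology ring of the real flag manifold `F(1^k, m)`. -/
abbrev FlagRing (k m : ℕ) : Type :=
  MvPolynomial (Fin k) (ZMod 2) ⧸ flagIdeal k m

/-- The image of the variable `x_{j+1}` in `R(k,m)` (`j` is 0-indexed). -/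
noncomputable def xGen (k m : ℕ) (j : Fin k) : FlagRing k m :=
  Ideal.Quotient.mk (flagIdeal k m) (MvPolynomial.X j)

/-- The zero-divisor `z_{j+1} = x_{j+1} ⊗ 1 + 1 ⊗ x_{j+1}` in `R(k,m) ⊗ R(k,m)`. -/
noncomputable def zGen (k m : ℕ) (j : Fin k) :
    FlagRing k m ⊗[ZMod 2] FlagRing k m :=
  xGen k m j ⊗ₜ 1 + 1 ⊗ₜ xGen k m j

/-- `x_{i+1,j+1}` in the `s`-fold tensor power `R(k,m)^{⊗ s}`: the element having
`x_{j+1}` in the `(i+1)`-st tensor factor and `1` elsewhere (`i`, `j` 0-indexed). -/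
noncomputable def xT (k m s : ℕ) (i : Fin s) (j : Fin k) :
    ⨂[ZMod 2] _ : Fin s, FlagRing k m :=
  PiTensorProduct.tprod (ZMod 2) (fun t => if t = i then xGen k m j else 1)

/-- The `s`-th zero-divisor `z_{i+1,j+1} = x_{1,j+1} + x_{i+1,j+1}` in `R(k,m)^{⊗ s}`. -/
noncomputable def zT (k m s : ℕ) (hs : 0 < s) (i : Fin s) (j : Fin k) :
    ⨂[ZMod 2] _ : Fin s, FlagRing k m :=
  xT k m s ⟨0, hs⟩ j + xT k m s i j

/-!
Put `m = 2 ^ e - 1`, `x = x_1` and `y = x_2`. On `R(2, m)`, the difference of the coefficients of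
`x ^ (m + 1) * y ^ m` and `x ^ m * y ^ (m + 1)` is a well-defined functional `φ`, the evaluation on
the fundamental class, and the given element is nonzero because `φ ⊗ ⋯ ⊗ φ` takes the value `1` on
it. Since the factor `z_{i,1} ^ p * z_{i,2} ^ q` involves only the tensor factors `1` and `i`, one
may first contract each of these factors with `φ` in the tensor factor `i`, and then apply `φ` to
the product of the contractions in `R(2, m)`. By the parities of the binomial coefficients
involved, the contractions are `x ^ (m + 1) * y ^ (m - 1)` for `i = 2`, `y` for `i = 3` and `1` for
`i ≥ 4`; their product is `x ^ (m + 1) * y ^ m`, on which `φ` is `1`.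
-/

section CompleteHomog

open Finset.HasAntidiagonal (antidiagonal)

variable {R : Type*} [CommSemiring R]

lemma completeHomog_nil (d : ℕ) : completeHomog ([] : List R) d = if d = 0 then 1 else 0 := by
  cases d <;> simp [completeHomog]

lemma completeHomog_cons (x : R) (l : List R) (d : ℕ) :
    completeHomog (x :: l) d = ∑ ij ∈ antidiagonal d, x ^ ij.1 * completeHomog l ij.2 := by
  rw [completeHomog, Finset.Nat.sum_antidiagonal_eq_sum_range_succ_mk]

lemma completeHomog_singleton (x : R) (d : ℕ) : completeHomog [x] d = x ^ d := by
  cases d <;> simp [completeHomog_cons, completeHomog_nil, Finset.Nat.antidiagonal_succ']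

lemma completeHomog_pair (x y : R) (d : ℕ) :
    completeHomog [x, y] d = ∑ ij ∈ antidiagonal d, x ^ ij.1 * y ^ ij.2 := by
  simp only [completeHomog_cons x, completeHomog_singleton]

end CompleteHomog

lemma flagIdeal_two (m : ℕ) :
    flagIdeal 2 m = Ideal.span
      {completeHomog [MvPolynomial.X 0, MvPolynomial.X 1] (m + 1), MvPolynomial.X 0 ^ (m + 2)} := by
  have h_take_two : (List.finRange 2).take 2 = [0, 1] := rfl
  have h_take_one : (List.finRange 2).take 1 = [0] := rfl
  rw [flagIdeal]
  congr 1
  ext p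
  constructor
  · rintro ⟨i, hi, hi', rfl⟩
    obtain rfl | rfl : i = 1 ∨ i = 2 := by omega
    · simp [h_take_two]
    · simp [h_take_one, completeHomog_singleton]
  · rintro (rfl | rfl)
    · exact ⟨1, by simp [h_take_two]⟩
    · exact ⟨2, by simp [h_take_one, completeHomog_singleton]⟩

section TopCoeff

open MvPolynomial

lemma single_zero_add_single_one_eq_iff (a b : ℕ) (d : Fin 2 →₀ ℕ) :
    Finsupp.single 0 a + Finsupp.single 1 b = d ↔ a = d 0 ∧ b = d 1 := by
  simp [Finsupp.ext_iff, Fin.forall_fin_two]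

lemma coeff_X_zero_pow_mul_X_one_pow {R : Type*} [CommSemiring R] (a b : ℕ) (d : Fin 2 →₀ ℕ) :
    coeff d (X 0 ^ a * X 1 ^ b : MvPolynomial (Fin 2) R) =
      if (a, b) = (d 0, d 1) then 1 else 0 := by
  simp [X_pow_eq_monomial, monomial_mul, coeff_monomial, single_zero_add_single_one_eq_iff]

lemma coeff_completeHomog_X_zero_X_one {R : Type*} [CommSemiring R] (n : ℕ) (d : Fin 2 →₀ ℕ) :
    coeff d (completeHomog [X 0, X 1] n : MvPolynomial (Fin 2) R) =
      if d 0 + d 1 = n then 1 else 0 := by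
  simp [completeHomog_pair, coeff_sum, coeff_X_zero_pow_mul_X_one_pow]

lemma map_eq_zero_of_mem_span_of_monomial_mul {σ R M : Type*} [CommSemiring R]
    [AddCommMonoid M] [Module R M] (f : MvPolynomial σ R →ₗ[R] M) {S : Set (MvPolynomial σ R)}
    (hf : ∀ d, ∀ g ∈ S, f (monomial d 1 * g) = 0)
    {p : MvPolynomial σ R} (hp : p ∈ Ideal.span S) : f p = 0 := by
  have h_span : Submodule.span R (Set.range fun d : σ →₀ ℕ => monomial d (1 : R)) = ⊤ := by
    simpa using (basisMonomials σ R).span_eq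
  have hp' : p ∈ (Ideal.span S).restrictScalars R := hp
  -- The multiples of `S` by monomials span the ideal generated by `S` as an `R`-module.
  rw [Ideal.span, ← Submodule.span_smul_of_span_eq_top h_span] at hp'
  refine (Submodule.span_le (p := LinearMap.ker f)).2 ?_ hp'
  rintro _ ⟨_, ⟨d, rfl⟩, g, hg, rfl⟩
  exact hf d g hg

variable {R : Type*} [CommRing R]

variable (R) in
/-- The functional on `R[x, y]` subtracting the coefficient of `x ^ m * y ^ (m + 1)` from that of
`x ^ (m + 1) * y ^ m`. It descends to the quotient by the relations of the flag manifold
`F(1, 1, m)`, where these two monomials span the top degree. -/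
noncomputable def topCoeff (m : ℕ) : MvPolynomial (Fin 2) R →ₗ[R] R :=
  lcoeff R (Finsupp.single 0 (m + 1) + Finsupp.single 1 m) -
    lcoeff R (Finsupp.single 0 m + Finsupp.single 1 (m + 1))

lemma topCoeff_X_zero_pow_mul_X_one_pow (m a b : ℕ) :
    topCoeff R m (X 0 ^ a * X 1 ^ b) =
      (if (a, b) = (m + 1, m) then 1 else 0) - (if (a, b) = (m, m + 1) then 1 else 0) := by
  simp [topCoeff, coeff_X_zero_pow_mul_X_one_pow]

lemma topCoeff_monomial_mul_completeHomog (m : ℕ) (d : Fin 2 →₀ ℕ) :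
    topCoeff R m (monomial d 1 * completeHomog [X 0, X 1] (m + 1)) = 0 := by
  -- Each of the two coefficients is `1` if `d` has degree `m`, and `0` otherwise.
  simp only [topCoeff, LinearMap.sub_apply, lcoeff_apply, coeff_monomial_mul',
    coeff_completeHomog_X_zero_X_one, Finsupp.le_def, Fin.forall_fin_two]
  simp only [← ite_and, sub_eq_zero, one_mul]
  refine if_congr ?_ rfl rfl
  simp only [Finsupp.add_apply, Finsupp.single_eq_same, ne_eq, zero_ne_one, one_ne_zero,
    not_false_eq_true, Finsupp.single_eq_of_ne, Finsupp.coe_tsub, Pi.sub_apply, add_zero, zero_add]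
  omega

lemma topCoeff_monomial_mul_X_zero_pow (m : ℕ) (d : Fin 2 →₀ ℕ) :
    topCoeff R m (monomial d 1 * X 0 ^ (m + 2)) = 0 := by
  simp only [topCoeff, X_pow_eq_monomial, LinearMap.sub_apply, lcoeff_apply, coeff_mul_monomial',
    Finsupp.single_le_iff]
  simp

end TopCoeff

/-- The functional on `R(2, m)` induced by `topCoeff`: evaluation of the top-degree part on the
mod-2 fundamental class of the flag manifold `F(1, 1, m)`. -/
noncomputable def topClass (m : ℕ) : Module.Dual (ZMod 2) (FlagRing 2 m) :=
  ((flagIdeal 2 m).restrictScalars (ZMod 2)).liftQ (topCoeff (ZMod 2) m) fun p hp => by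
    refine map_eq_zero_of_mem_span_of_monomial_mul (topCoeff (ZMod 2) m) ?_ (flagIdeal_two m ▸ hp)
    rintro d _ (rfl | rfl)
    · exact topCoeff_monomial_mul_completeHomog m d
    · exact topCoeff_monomial_mul_X_zero_pow m d

lemma topClass_xGen_pow_mul_xGen_pow (m a b : ℕ) :
    topClass m (xGen 2 m 0 ^ a * xGen 2 m 1 ^ b) =
      (if (a, b) = (m + 1, m) then 1 else 0) + (if (a, b) = (m, m + 1) then 1 else 0) := by
  rw [← CharTwo.sub_eq_add]
  exact topCoeff_X_zero_pow_mul_X_one_pow m a b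

lemma topClass_xGen_pow_succ_mul_xGen_pow (m : ℕ) :
    topClass m (xGen 2 m 0 ^ (m + 1) * xGen 2 m 1 ^ m) = 1 := by
  simp [topClass_xGen_pow_mul_xGen_pow]

section Contraction

variable {R : Type*} [CommSemiring R]

section

variable {M N : Type*} [AddCommMonoid M] [AddCommMonoid N] [Module R M] [Module R N]

/-- The contraction `id ⊗ φ : M ⊗ N → M` of the second tensor factor with a functional `φ`. -/
noncomputable def contractSnd (φ : Module.Dual R N) : M ⊗[R] N →ₗ[R] M :=
  (TensorProduct.rid R M).toLinearMap ∘ₗ φ.lTensor M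

lemma contractSnd_tmul (φ : Module.Dual R N) (x : M) (y : N) :
    contractSnd φ (x ⊗ₜ[R] y) = φ y • x := by
  simp [contractSnd]

end

lemma tprod_eq_prod_singleAlgHom {ι : Type*} [Fintype ι] [DecidableEq ι] {A : ι → Type*}
    [∀ i, CommSemiring (A i)] [∀ i, Algebra R (A i)] (a : ∀ i, A i) :
    PiTensorProduct.tprod R a = ∏ i, PiTensorProduct.singleAlgHom (R := R) i (a i) := by
  conv_lhs => rw [← Finset.univ_prod_mulSingle a, PiTensorProduct.tprod_prod]
  rfl

variable {n : ℕ} {A : Fin (n + 1) → Type*} [∀ i, CommSemiring (A i)] [∀ i, Algebra R (A i)]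

variable (R A) in
/-- The algebra map from `A 0 ⊗ A (i + 1)` to the tensor product of all the `A j` that places its
two factors in the positions `0` and `i + 1`, with `1` elsewhere. -/
noncomputable def tensorPairMap (i : Fin n) : A 0 ⊗[R] A i.succ →ₐ[R] ⨂[R] i, A i :=
  Algebra.TensorProduct.productMap (PiTensorProduct.singleAlgHom 0)
    (PiTensorProduct.singleAlgHom i.succ)

lemma prod_tensorPairMap_tmul (a : Fin n → A 0) (b : ∀ i : Fin n, A i.succ) :
    ∏ i, tensorPairMap R A i (a i ⊗ₜ b i) = PiTensorProduct.tprod R (Fin.cons (∏ i, a i) b) := by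
  simp [tprod_eq_prod_singleAlgHom, tensorPairMap, Fin.prod_univ_succ, Finset.prod_mul_distrib,
    -PiTensorProduct.singleAlgHom_apply]

lemma dualDistrib_prod_tensorPairMap (φ : ∀ i, Module.Dual R (A i))
    (t : ∀ i : Fin n, A 0 ⊗[R] A i.succ) :
    PiTensorProduct.dualDistrib (PiTensorProduct.tprod R φ) (∏ i, tensorPairMap R A i (t i)) =
      φ 0 (∏ i, contractSnd (φ i.succ) (t i)) := by
  choose S hS using fun i => TensorProduct.exists_finset (t i)
  have h_pure (p : ∀ i : Fin n, A 0 × A i.succ) :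
      PiTensorProduct.dualDistrib (PiTensorProduct.tprod R φ)
        (∏ i, tensorPairMap R A i ((p i).1 ⊗ₜ (p i).2)) =
        φ 0 (∏ i, contractSnd (φ i.succ) ((p i).1 ⊗ₜ (p i).2)) := by
    simp [prod_tensorPairMap_tmul, contractSnd_tmul, Fin.prod_univ_succ, Finset.prod_smul, mul_comm]
  simp only [hS, map_sum, Finset.prod_univ_sum, h_pure]

end Contraction

lemma tmul_one_add_one_tmul_pow {R A : Type*} [CommSemiring R] [CommSemiring A] [Algebra R A]
    (x : A) (p : ℕ) :
    (x ⊗ₜ[R] (1 : A) + (1 : A) ⊗ₜ[R] x) ^ p =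
      ∑ c ∈ Finset.range (p + 1), p.choose c • ((x ^ (p - c)) ⊗ₜ[R] (x ^ c)) := by
  simp [add_comm (x ⊗ₜ[R] (1 : A)), add_pow, mul_comm]

lemma contractSnd_add_pow_mul_add_pow {R A : Type*} [CommSemiring R] [CommSemiring A] [Algebra R A]
    (φ : Module.Dual R A) (x y : A) (p q : ℕ) :
    contractSnd φ ((x ⊗ₜ 1 + 1 ⊗ₜ x) ^ p * (y ⊗ₜ 1 + 1 ⊗ₜ y) ^ q) =
      ∑ cd ∈ Finset.range (p + 1) ×ˢ Finset.range (q + 1), (p.choose cd.1 * q.choose cd.2) •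
          φ (x ^ cd.1 * y ^ cd.2) • (x ^ (p - cd.1) * y ^ (q - cd.2)) := by
  simp only [tmul_one_add_one_tmul_pow, Finset.sum_mul_sum, ← Finset.sum_product',
    smul_mul_smul_comm, Algebra.TensorProduct.tmul_mul_tmul, map_sum, map_nsmul, contractSnd_tmul]

lemma sum_choose_mul_choose_smul_ite {R M : Type*} [Semiring R] [AddCommMonoid M] [Module R M]
    (p q a b : ℕ) (f : ℕ × ℕ → M) :
    ∑ cd ∈ Finset.range (p + 1) ×ˢ Finset.range (q + 1), (p.choose cd.1 * q.choose cd.2) •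
        (if cd = (a, b) then (1 : R) else 0) • f cd = (p.choose a * q.choose b) • f (a, b) := by
  rw [Finset.sum_eq_single (a, b)]
  · simp
  · simp +contextual
  · intro h
    have h_choose : p.choose a * q.choose b = 0 := by
      simpa [Nat.choose_eq_zero_iff, or_iff_not_imp_left] using h
    simp [h_choose]

-- Where a subtraction truncates, one of the binomial coefficients in front vanishes.
lemma contractSnd_topClass_zGen_pow_mul_zGen_pow (m p q : ℕ) :
    contractSnd (topClass m) (zGen 2 m 0 ^ p * zGen 2 m 1 ^ q) =
      ((p.choose (m + 1) * q.choose m : ℕ) : ZMod 2) •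
          (xGen 2 m 0 ^ (p - (m + 1)) * xGen 2 m 1 ^ (q - m)) +
        ((p.choose m * q.choose (m + 1) : ℕ) : ZMod 2) •
          (xGen 2 m 0 ^ (p - m) * xGen 2 m 1 ^ (q - (m + 1))) := by
  simp only [zGen, contractSnd_add_pow_mul_add_pow, topClass_xGen_pow_mul_xGen_pow, add_smul,
    smul_add, Finset.sum_add_distrib, Nat.cast_smul_eq_nsmul]
  rw [sum_choose_mul_choose_smul_ite, sum_choose_mul_choose_smul_ite]

lemma odd_choose_of_succ_eq_two_pow {e n a : ℕ} (hn : n + 1 = 2 ^ e) (ha : a ≤ n) :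
    Odd (n.choose a) := by
  induction a with
  | zero => simp
  | succ a ih =>
    have h_even : Even ((n + 1).choose (a + 1)) :=
      even_iff_two_dvd.2 (hn ▸ Nat.prime_two.dvd_choose_pow a.succ_ne_zero (by omega))
    rw [Nat.choose_succ_succ, Nat.even_add'] at h_even
    exact h_even.1 (ih (by omega))

lemma even_choose_two_mul_self {m : ℕ} (hm : 0 < m) : Even ((2 * m).choose m) :=
  even_iff_two_dvd.2 (Nat.centralBinom_eq_two_mul_choose m ▸ Nat.two_dvd_centralBinom_of_one_le hm)

lemma odd_choose_two_mul_succ {m : ℕ} (hm : 0 < m) (h : Odd ((2 * m + 1).choose (m + 1))) :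
    Odd ((2 * m).choose (m + 1)) := by
  rw [Nat.choose_succ_succ, Nat.odd_add'] at h
  exact h.2 (even_choose_two_mul_self hm)

lemma contractSnd_topClass_zGen_pow_succ_mul_zGen_pow (m : ℕ) :
    contractSnd (topClass m) (zGen 2 m 0 ^ (m + 1) * zGen 2 m 1 ^ m) = 1 := by
  simp [contractSnd_topClass_zGen_pow_mul_zGen_pow]

lemma contractSnd_topClass_zGen_pow_mul_zGen_pow_add_two {m : ℕ} (hm : Odd m) :
    contractSnd (topClass m) (zGen 2 m 0 ^ m * zGen 2 m 1 ^ (m + 2)) = xGen 2 m 1 := by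
  have h_cast : ((m + 2 : ℕ) : ZMod 2) = 1 := ZMod.natCast_eq_one_iff_odd.2 (hm.add_even even_two)
  rw [contractSnd_topClass_zGen_pow_mul_zGen_pow, Nat.choose_self, Nat.choose_succ_self,
    Nat.choose_succ_self_right, one_mul, h_cast]
  simp

lemma contractSnd_topClass_zGen_pow_two_mul_succ_mul_zGen_pow_two_mul {m : ℕ} (hm : 0 < m)
    (h_odd : Odd ((2 * m + 1).choose m)) :
    contractSnd (topClass m) (zGen 2 m 0 ^ (2 * m + 1) * zGen 2 m 1 ^ (2 * m)) =
      xGen 2 m 0 ^ (m + 1) * xGen 2 m 1 ^ (m - 1) := by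
  have h_odd' : Odd ((2 * m).choose (m + 1)) :=
    odd_choose_two_mul_succ hm (Nat.choose_symm_half m ▸ h_odd)
  have h_zero : (((2 * m + 1).choose (m + 1) * (2 * m).choose m : ℕ) : ZMod 2) = 0 :=
    ZMod.natCast_eq_zero_iff_even.2 ((even_choose_two_mul_self hm).mul_left _)
  have h_one : (((2 * m + 1).choose m * (2 * m).choose (m + 1) : ℕ) : ZMod 2) = 1 :=
    ZMod.natCast_eq_one_iff_odd.2 (h_odd.mul h_odd')
  rw [contractSnd_topClass_zGen_pow_mul_zGen_pow, h_zero, h_one, zero_smul, zero_add, one_smul,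
    show 2 * m + 1 - m = m + 1 by omega, show 2 * m - (m + 1) = m - 1 by omega]

lemma xT_eq_singleAlgHom (k m s : ℕ) (i : Fin s) (j : Fin k) :
    xT k m s i j = PiTensorProduct.singleAlgHom (R := ZMod 2) (A := fun _ => FlagRing k m) i
      (xGen k m j) := by
  rw [xT, PiTensorProduct.singleAlgHom_apply]
  congr 1
  ext t
  simp [Pi.mulSingle_apply]

lemma zT_succ_eq_tensorPairMap (k m n : ℕ) (i : Fin n) (j : Fin k) :
    zT k m (n + 1) n.succ_pos i.succ j =
      tensorPairMap (ZMod 2) (fun _ => FlagRing k m) i (zGen k m j) := by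
  simp only [zT, zGen, xT_eq_singleAlgHom, tensorPairMap, map_add,
    Algebra.TensorProduct.productMap_left_apply, Algebra.TensorProduct.productMap_right_apply]
  rfl

lemma dualDistrib_topClass_prod_zT (m n : ℕ) (p q : Fin n → ℕ) :
    PiTensorProduct.dualDistrib (PiTensorProduct.tprod (ZMod 2) fun _ => topClass m)
        (∏ i, (zT 2 m (n + 1) n.succ_pos i.succ 0 ^ p i *
          zT 2 m (n + 1) n.succ_pos i.succ 1 ^ q i)) =
      topClass m (∏ i, contractSnd (topClass m) (zGen 2 m 0 ^ p i * zGen 2 m 1 ^ q i)) := by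
  rw [← dualDistrib_prod_tensorPairMap (fun _ => topClass m)]
  simp only [zT_succ_eq_tensorPairMap, map_mul, map_pow]

lemma prod_filter_le_val {M : Type*} [CommMonoid M] (n k : ℕ) (f : Fin (n + k) → M) :
    ∏ i with k ≤ i.val, f i = ∏ i : Fin n, f (i.addNat k) := by
  have h_filter : ({i | k ≤ i.val} : Finset (Fin (n + k))) = Finset.univ.map (Fin.addNatEmb k) := by
    ext i
    simp only [Finset.mem_filter_univ, Finset.mem_map, Finset.mem_univ, true_and,
      Fin.addNatEmb_apply]
    exact ⟨fun h => ⟨i.subNat k h, Fin.addNat_subNat h⟩, by rintro ⟨j, rfl⟩; simp⟩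
  rw [h_filter, Finset.prod_map]
  rfl

/-- for `s ≥ 3` and `e ≥ 1`, in `R(2, 2^e-1)^{⊗s}` one has
`(z_{2,1}^{2^{e+1}-1} z_{2,2}^{2^{e+1}-2}) · (z_{3,1}^{2^e-1} z_{3,2}^{2^e+1}) ·
∏_{i=4}^{s} (z_{i,1}^{2^e} z_{i,2}^{2^e-1}) ≠ 0`. -/
theorem statement17 (s e : ℕ) (hs : 3 ≤ s) (he : 1 ≤ e) :
    (zT 2 (2 ^ e - 1) s (by omega) ⟨1, by omega⟩ 0 ^ (2 ^ (e + 1) - 1) *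
        zT 2 (2 ^ e - 1) s (by omega) ⟨1, by omega⟩ 1 ^ (2 ^ (e + 1) - 2)) *
      (zT 2 (2 ^ e - 1) s (by omega) ⟨2, by omega⟩ 0 ^ (2 ^ e - 1) *
        zT 2 (2 ^ e - 1) s (by omega) ⟨2, by omega⟩ 1 ^ (2 ^ e + 1)) *
      ∏ i ∈ Finset.univ.filter (fun i : Fin s => 3 ≤ i.val),
        (zT 2 (2 ^ e - 1) s (by omega) i 0 ^ (2 ^ e) *
          zT 2 (2 ^ e - 1) s (by omega) i 1 ^ (2 ^ e - 1)) ≠ 0 := by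
  obtain ⟨n, rfl⟩ := Nat.exists_eq_add_of_le' hs
  obtain ⟨m, hm⟩ : ∃ m, m = 2 ^ e - 1 := ⟨_, rfl⟩
  have h_pow : 2 ^ e = m + 1 := by have := Nat.one_le_two_pow (n := e); omega
  have h_even : Even (2 ^ e) := Nat.even_pow.2 ⟨even_two, by omega⟩
  have h_odd : Odd m := by simpa [h_pow, Nat.even_add_one] using h_even
  have h_choose : Odd ((2 * m + 1).choose m) :=
    odd_choose_of_succ_eq_two_pow (e := e + 1) (by omega) (by omega)
  rw [← hm, show 2 ^ (e + 1) - 1 = 2 * m + 1 by omega, show 2 ^ (e + 1) - 2 = 2 * m by omega,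
    h_pow, prod_filter_le_val]
  let p : Fin (n + 2) → ℕ := Fin.cons (2 * m + 1) (Fin.cons m fun _ => m + 1)
  let q : Fin (n + 2) → ℕ := Fin.cons (2 * m) (Fin.cons (m + 2) fun _ => m)
  have h_contract : ∏ i, contractSnd (topClass m) (zGen 2 m 0 ^ p i * zGen 2 m 1 ^ q i) =
      xGen 2 m 0 ^ (m + 1) * xGen 2 m 1 ^ m := by
    simp only [p, q, Fin.prod_univ_succ, Fin.cons_zero, Fin.cons_succ,
      contractSnd_topClass_zGen_pow_two_mul_succ_mul_zGen_pow_two_mul h_odd.pos h_choose,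
      contractSnd_topClass_zGen_pow_mul_zGen_pow_add_two h_odd,
      contractSnd_topClass_zGen_pow_succ_mul_zGen_pow, Finset.prod_const_one, mul_one]
    rw [mul_assoc, pow_sub_one_mul h_odd.pos.ne']
  have h_value := dualDistrib_topClass_prod_zT m (n + 2) p q
  rw [h_contract, topClass_xGen_pow_succ_mul_xGen_pow, Fin.prod_univ_succ, Fin.prod_univ_succ,
    ← mul_assoc] at h_value
  intro h_zero
  exact one_ne_zero (h_value.symm.trans ((congrArg _ h_zero).trans (map_zero _)))
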